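/- There exists an involution Φ : P̃(T,B) → P̃(T,B) (i.e., Φ(Φ(h)) = h for all h) such that for every h ∈ P̃(T,B): Φ(h) has the same descent set as h, Φ(h) has the same non-contact height sequence as h, t(Φ(h)) = b(h), and b(Φ(h)) = t(h). -/

import Mathlib

/-- The number of east steps of `h` shared with the path `Q` (contacts with `Q`). -/
noncomputable def ccount {x y : ℕ} (Q h : Fin x → Fin (y+1)) : ℕ :=
  Nat.card {j : Fin x // h j = Q j}

/-- The descent set of `h`: positions `j` where the `(j+1)`-st east step is
strictly higher than the `(j+2)`-nd one, i.e. where south steps occur. -/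
def descentSet {x y : ℕ} (h : Fin x → Fin (y+1)) : Set (Fin (x-1)) :=
  {j | h ⟨(j : ℕ) + 1, by have := j.isLt; omega⟩ < h ⟨(j : ℕ), by have := j.isLt; omega⟩}

/-- The non-contact height sequence of `h`: the list of heights of the east steps
of `h` that touch neither `B` nor `T`, in order. -/
def ncseq {x y : ℕ} (T B h : Fin x → Fin (y+1)) : List (Fin (y+1)) :=
  ((List.finRange x).filter fun j => decide (B j < h j ∧ h j < T j)).map h

/-!
Read a path from left to right as a word, with a letter `b` for each step that touches only `B` and
a letter `t` for each step that touches only `T`, and cancel pairs `t … b` like brackets. A word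
`b … b t … t` remains. As in the signature rule for crystals, the last uncancelled `b` can be turned
into a `t`, which becomes the first uncancelled one: the step at this bottom contact is deleted and
a step at a top contact is inserted nearby, the steps in between being shifted by one position. The
new position is the only one for which the descents stay where they are. The steps shifted are
neither bottom nor top contacts, so the cancelled pairs and the non-contact heights are unchanged.
Rotation by 180 degrees provides the inverse operation. Paths thus fall into strings along which
bottom contacts become top contacts one by one, and the involution reverses each string. Continuing
all paths to the left and to the right by common steps of `B` and `T` removes the boundary cases.
-/

namespace ContactSwitch

/-! ### Reversing strings -/

section Chain

open Relation

variable {X β : Type*} {r : X → X → Prop} {b t ν : X → ℕ} {F : X → β} {h k : X}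

theorem apply_le_of_reflTransGen (hr : ∀ h k, r h k → b h = b k + 1) (hhk : ReflTransGen r h k) :
    b k ≤ b h := by
  induction hhk with
  | refl => rfl
  | tail _ hbc ih => have := hr _ _ hbc; omega

theorem eq_of_reflTransGen_of_apply_le (hr : ∀ h k, r h k → b h = b k + 1)
    (hhk : ReflTransGen r h k) (hle : b h ≤ b k) : h = k := by
  rcases hhk.cases_head with rfl | ⟨c, hhc, hck⟩
  · rfl
  · have := hr _ _ hhc
    have := apply_le_of_reflTransGen hr hck
    omega

theorem exists_reflTransGen_apply_eq (hfwd : ∀ h, ν h < b h → ∃ k, r h k)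
    (hr : ∀ h k, r h k → b h = b k + 1 ∧ ν k = ν h) {m : ℕ} (hν : ν h ≤ m) (hm : m ≤ b h) :
    ∃ k, ReflTransGen r h k ∧ b k = m := by
  induction hm using Nat.decreasingInduction with
  | self => exact ⟨h, .refl, rfl⟩
  | of_succ i _ ih =>
    obtain ⟨k, hhk, hk⟩ := ih (by omega)
    have hνk : ν k = ν h := by
      clear hk
      induction hhk with
      | refl => rfl
      | tail _ hbc ih => rw [(hr _ _ hbc).2, ih]
    obtain ⟨l, hkl⟩ := hfwd k (by omega)
    exact ⟨l, hhk.tail hkl, by have := (hr _ _ hkl).1; omega⟩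

theorem eq_of_comparable_of_apply_eq (hright : Relator.RightUnique r) (hleft : Relator.LeftUnique r)
    (hr : ∀ h k, r h k → b h = b k + 1) {h k k' : X}
    (hk : ReflTransGen r h k ∨ ReflTransGen r k h)
    (hk' : ReflTransGen r h k' ∨ ReflTransGen r k' h) (hb : b k = b k') : k = k' := by
  have hcomp : ReflTransGen r k k' ∨ ReflTransGen r k' k := by
    rcases hk with hk | hk <;> rcases hk' with hk' | hk'
    · exact hk.total_of_right_unique hright hk'
    · exact .inr (hk'.trans hk)
    · exact .inl (hk.trans hk')
    · have := ReflTransGen.total_of_right_unique (r := Function.swap r)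
        (fun _ _ _ h₁ h₂ => hleft h₁ h₂) hk.swap hk'.swap
      exact this.symm.imp reflTransGen_swap.1 reflTransGen_swap.1
  rcases hcomp with h | h
  · exact eq_of_reflTransGen_of_apply_le hr h hb.le
  · exact (eq_of_reflTransGen_of_apply_le hr h hb.ge).symm

/- The `r`-chains are strings along which `b` runs down and `t` runs up with `b + t` constant,
`b` from `ν + m` to `ν` and `t` from `ν` to `ν + m`; the involution reverses each string. -/
theorem exists_involutive_of_chain (hright : Relator.RightUnique r) (hleft : Relator.LeftUnique r)
    (hνb : ∀ h, ν h ≤ b h) (hνt : ∀ h, ν h ≤ t h)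
    (hfwd : ∀ h, ν h < b h → ∃ k, r h k) (hbwd : ∀ k, ν k < t k → ∃ h, r h k)
    (hr : ∀ h k, r h k → b h = b k + 1 ∧ t k = t h + 1 ∧ ν k = ν h ∧ F k = F h) :
    ∃ Φ : X → X, Function.Involutive Φ ∧
      ∀ h, F (Φ h) = F h ∧ t (Φ h) = b h ∧ b (Φ h) = t h := by
  have hinv : ∀ {h k}, ReflTransGen r h k → b k + t k = b h + t h ∧ F k = F h := by
    intro h k hhk
    induction hhk with
    | refl => exact ⟨rfl, rfl⟩
    | tail _ hbc ih =>
      obtain ⟨h₁, h₂, -, h₄⟩ := hr _ _ hbc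
      exact ⟨by omega, h₄.trans ih.2⟩
  have hex : ∀ h, ∃ k, (ReflTransGen r h k ∨ ReflTransGen r k h) ∧ b k = t h := by
    intro h
    rcases le_total (t h) (b h) with hle | hle
    · obtain ⟨k, hhk, hk⟩ := exists_reflTransGen_apply_eq hfwd
        (fun h k hk => ⟨(hr h k hk).1, (hr h k hk).2.2.1⟩) (hνt h) hle
      exact ⟨k, .inl hhk, hk⟩
    · obtain ⟨k, hhk, hk⟩ := exists_reflTransGen_apply_eq (r := Function.swap r) hbwd
        (fun h k hk => ⟨(hr k h hk).2.1, (hr k h hk).2.2.1.symm⟩) (hνb h) hle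
      have hkh := reflTransGen_swap.1 hhk
      exact ⟨k, .inr hkh, by have := (hinv hkh).1; omega⟩
  choose Φ hΦ hb using hex
  have ht : ∀ h, F (Φ h) = F h ∧ t (Φ h) = b h := by
    intro h
    have := hb h
    rcases hΦ h with hh | hh
    · exact ⟨(hinv hh).2, by have := (hinv hh).1; omega⟩
    · exact ⟨(hinv hh).2.symm, by have := (hinv hh).1; omega⟩
  refine ⟨Φ, fun h => ?_, fun h => ⟨(ht h).1, (ht h).2, hb h⟩⟩
  exact eq_of_comparable_of_apply_eq hright hleft (fun h k hk => (hr h k hk).1) (hΦ (Φ h))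
    (hΦ h).symm ((hb _).trans (ht h).2)

end Chain

/-! ### The signature rule -/

section Cut

variable {b t : Finset ℤ} {p q j : ℤ}

/-- The number of letters on the wrong side of the cut just before position `j`, in the word with
a letter `b` at each position in `b` and a letter `t` at each position in `t`, when the letters `b`
should precede the cut and the letters `t` should follow it. -/
def cutCost (b t : Finset ℤ) (j : ℤ) : ℕ :=
  (t.filter (· < j)).card + (b.filter (j ≤ ·)).card

/-- The least number of misplaced letters over all cuts, i.e. the number of pairs `t … b`
cancelled when the word is reduced by the signature rule. -/
noncomputable def minCutCost (b t : Finset ℤ) : ℕ := ⨅ j, cutCost b t j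

/-- The cuts on the two sides of position `p` are cheapest among all cuts on the respective side of
`p`. For `p ∈ b` this singles out the last uncancelled `b`, for `p ∈ t` the first uncancelled
`t`. -/
def IsCritical (b t : Finset ℤ) (p : ℤ) : Prop :=
  (∀ j ≤ p, cutCost b t p ≤ cutCost b t j) ∧ ∀ j > p, cutCost b t (p + 1) ≤ cutCost b t j

theorem cutCost_add_one (b t : Finset ℤ) (j : ℤ) :
    cutCost b t (j + 1) + (if j ∈ b then 1 else 0) = cutCost b t j + if j ∈ t then 1 else 0 := by
  have ht : (t.filter (· < j + 1)).card = (t.filter (· < j)).card + if j ∈ t then 1 else 0 := by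
    rw [← Finset.sum_ite_eq' t j fun _ => 1, Finset.card_filter, Finset.card_filter,
      ← Finset.sum_add_distrib]
    exact Finset.sum_congr rfl (by grind)
  have hb : (b.filter (j ≤ ·)).card = (b.filter (j + 1 ≤ ·)).card + if j ∈ b then 1 else 0 := by
    rw [← Finset.sum_ite_eq' b j fun _ => 1, Finset.card_filter, Finset.card_filter,
      ← Finset.sum_add_distrib]
    exact Finset.sum_congr rfl (by grind)
  simp only [cutCost]
  omega

theorem cutCost_eq_of_forall_notMem {i : ℤ} (hij : i ≤ j)
    (hfree : ∀ l, i ≤ l → l < j → l ∉ b ∧ l ∉ t) : cutCost b t j = cutCost b t i := by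
  induction j, hij using Int.leInduction with
  | base => rfl
  | succ n hn ih =>
    have := cutCost_add_one b t n
    rw [if_neg (hfree n hn (by omega)).1, if_neg (hfree n hn (by omega)).2] at this
    rw [← ih fun l hil hln => hfree l hil (by omega)]
    exact this

theorem cutCost_erase_insert (hp : p ∈ b) (hq : q ∉ t) (j : ℤ) :
    cutCost (b.erase p) (insert q t) j + (if j ≤ p then 1 else 0) =
      cutCost b t j + if q < j then 1 else 0 := by
  have ht : ((insert q t).filter (· < j)).card =
      (t.filter (· < j)).card + if q < j then 1 else 0 := by
    rw [Finset.filter_insert]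
    split_ifs
    · exact Finset.card_insert_of_notMem (by simp [hq])
    · rfl
  have hb : ((b.erase p).filter (j ≤ ·)).card + (if j ≤ p then 1 else 0) =
      (b.filter (j ≤ ·)).card := by
    rw [Finset.filter_erase]
    split_ifs with hjp
    · exact Finset.card_erase_add_one (by simp [hp, hjp])
    · rw [Finset.erase_eq_of_notMem (by simp [hjp]), add_zero]
  simp only [cutCost]
  omega

theorem exists_cutCost_eq_card_left (b t : Finset ℤ) :
    ∃ m, ∀ j ≤ m, cutCost b t j = b.card := by
  obtain ⟨m, hm⟩ := (b ∪ t).bddBelow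
  refine ⟨m, fun j hj => ?_⟩
  have hle : ∀ i, i ∈ b ∨ i ∈ t → j ≤ i := fun i hi =>
    hj.trans (hm (Finset.mem_coe.2 (Finset.mem_union.2 hi)))
  rw [cutCost, Finset.filter_false_of_mem, Finset.filter_true_of_mem, Finset.card_empty, zero_add]
    <;> grind

theorem exists_cutCost_eq_card_right (b t : Finset ℤ) :
    ∃ m, ∀ j > m, cutCost b t j = t.card := by
  obtain ⟨m, hm⟩ := (b ∪ t).bddAbove
  refine ⟨m, fun j hj => ?_⟩
  have hlt : ∀ i, i ∈ b ∨ i ∈ t → i < j := fun i hi =>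
    (hm (Finset.mem_coe.2 (Finset.mem_union.2 hi))).trans_lt hj
  rw [cutCost, Finset.filter_true_of_mem, Finset.filter_false_of_mem, Finset.card_empty, add_zero]
    <;> grind

theorem minCutCost_le (b t : Finset ℤ) (j : ℤ) : minCutCost b t ≤ cutCost b t j :=
  ciInf_le' _ j

theorem minCutCost_le_card_left (b t : Finset ℤ) : minCutCost b t ≤ b.card := by
  obtain ⟨m, hm⟩ := exists_cutCost_eq_card_left b t
  exact hm m le_rfl ▸ minCutCost_le b t m

theorem minCutCost_le_card_right (b t : Finset ℤ) : minCutCost b t ≤ t.card := by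
  obtain ⟨m, hm⟩ := exists_cutCost_eq_card_right b t
  exact hm (m + 1) (by omega) ▸ minCutCost_le b t (m + 1)

theorem exists_isCritical_drop (hlt : minCutCost b t < b.card) :
    ∃ p, IsCritical b t p ∧ cutCost b t (p + 1) < cutCost b t p := by
  obtain ⟨m, hm⟩ := exists_cutCost_eq_card_left b t
  obtain ⟨j, hj, hleast⟩ := Int.exists_least_of_bdd (P := fun j => cutCost b t j = minCutCost b t)
    ⟨m, fun j hj => by_contra fun hjm => by have := hm j (by omega); omega⟩
    (ciInf_mem (cutCost b t))
  have hgt : ∀ i < j, minCutCost b t < cutCost b t i := fun i hi =>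
    (minCutCost_le b t i).lt_of_ne fun h => by have := hleast i h.symm; omega
  have hstep := cutCost_add_one b t (j - 1)
  have hlast := hgt (j - 1) (by omega)
  rw [sub_add_cancel] at hstep
  refine ⟨j - 1, ⟨fun i hi => ?_, fun i _ => ?_⟩, ?_⟩
  · have := hgt i (by omega)
    grind
  · rw [sub_add_cancel, hj]
    exact minCutCost_le b t i
  · rwa [sub_add_cancel, hj]

theorem exists_isCritical_rise (hlt : minCutCost b t < t.card) :
    ∃ q, IsCritical b t q ∧ cutCost b t q < cutCost b t (q + 1) := by
  obtain ⟨m, hm⟩ := exists_cutCost_eq_card_right b t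
  obtain ⟨j, hj, hgreatest⟩ :=
    Int.exists_greatest_of_bdd (P := fun j => cutCost b t j = minCutCost b t)
    ⟨m, fun j hj => by_contra fun hjm => by have := hm j (by omega); omega⟩
    (ciInf_mem (cutCost b t))
  have hgt : ∀ i > j, minCutCost b t < cutCost b t i := fun i hi =>
    (minCutCost_le b t i).lt_of_ne fun h => by have := hgreatest i h.symm; omega
  have hstep := cutCost_add_one b t j
  have hlast := hgt (j + 1) (by omega)
  refine ⟨j, ⟨fun i _ => ?_, fun i hi => ?_⟩, ?_⟩
  · rw [hj]
    exact minCutCost_le b t i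
  · have := hgt i hi
    grind
  · rwa [hj]

theorem IsCritical.minCutCost_eq (hp : IsCritical b t p) :
    minCutCost b t = min (cutCost b t p) (cutCost b t (p + 1)) := by
  refine le_antisymm (le_min (minCutCost_le b t _) (minCutCost_le b t _)) (le_ciInf fun j => ?_)
  rcases le_or_gt j p with hj | hj
  · exact (min_le_left _ _).trans (hp.1 j hj)
  · exact (min_le_right _ _).trans (hp.2 j hj)

theorem IsCritical.le_of_drop (hp : IsCritical b t p) (hq : IsCritical b t q)
    (hdrop : cutCost b t (q + 1) < cutCost b t q) : q ≤ p := by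
  by_contra! hpq
  have := hp.2 (q + 1) (by omega)
  have := hq.1 (p + 1) (by omega)
  omega

theorem IsCritical.le_of_rise (hp : IsCritical b t p) (hq : IsCritical b t q)
    (hrise : cutCost b t p < cutCost b t (p + 1)) : q ≤ p := by
  by_contra! hpq
  have := hp.2 q hpq
  have := hq.1 p hpq.le
  omega

section EraseInsert

variable (hpb : p ∈ b) (hpt : p ∉ t) (hfree : ∀ i ∈ Set.uIcc p q, i ≠ p → i ∉ b ∧ i ∉ t)

include hfree

theorem cutCost_eq_of_mem_Icc (j : ℤ) :
    (p < j → j ≤ q + 1 → cutCost b t j = cutCost b t (p + 1)) ∧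
      (q ≤ j → j ≤ p → cutCost b t j = cutCost b t p) := by
  refine ⟨fun hpj hjq => cutCost_eq_of_forall_notMem hpj fun l hpl hlj => ?_,
    fun hqj hjp => (cutCost_eq_of_forall_notMem hjp fun l hjl hlp => ?_).symm⟩
  all_goals exact hfree l (by grind [Set.mem_uIcc]) (by omega)

include hpt

theorem notMem_of_forall_uIcc : q ∉ t := by
  rcases eq_or_ne q p with rfl | hqp
  · exact hpt
  · exact (hfree q (by simp) hqp).2

include hpb

theorem cutCost_erase_insert_self :
    cutCost (b.erase p) (insert q t) q = cutCost b t (p + 1) ∧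
      cutCost (b.erase p) (insert q t) (q + 1) = cutCost b t p := by
  have hqt := notMem_of_forall_uIcc hpt hfree
  have hstep := cutCost_add_one b t p
  have hq := cutCost_erase_insert hpb hqt q
  have hq' := cutCost_erase_insert hpb hqt (q + 1)
  have hfree' := cutCost_eq_of_mem_Icc hfree
  have := hfree' q
  have := hfree' (q + 1)
  grind

theorem isCritical_erase_insert :
    IsCritical (b.erase p) (insert q t) q ↔ IsCritical b t p := by
  have hqt := notMem_of_forall_uIcc hpt hfree
  obtain ⟨hq, hq'⟩ := cutCost_erase_insert_self hpb hpt hfree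
  have hstep := cutCost_add_one b t p
  have hcost := cutCost_erase_insert hpb hqt
  have hmid := cutCost_eq_of_mem_Icc hfree
  simp only [IsCritical, hq, hq', if_pos hpb, if_neg hpt] at hstep ⊢
  refine ⟨fun ⟨hleft, hright⟩ => ⟨fun j hj => ?_, fun j hj => ?_⟩,
    fun ⟨hleft, hright⟩ => ⟨fun j hj => ?_, fun j hj => ?_⟩⟩
  all_goals
    have := hcost j
    have := hmid j
    have := hleft j
    have := hright j
    grind

theorem minCutCost_erase_insert (hp : IsCritical b t p) :
    minCutCost (b.erase p) (insert q t) = minCutCost b t := by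
  obtain ⟨hq, hq'⟩ := cutCost_erase_insert_self hpb hpt hfree
  rw [((isCritical_erase_insert hpb hpt hfree).2 hp).minCutCost_eq, hp.minCutCost_eq, hq, hq',
    min_comm]

end EraseInsert

end Cut

/-! ### Switching a contact -/

section Switch

open OrderDual Set

variable {α : Type*} {T B h k h' k' : ℤ → α} {p p' q q' : ℤ}

/-- The strictly increasing enumeration of the integers other than `p`. -/
def skip (p i : ℤ) : ℤ := if i < p then i else i + 1

theorem strictMono_skip (p : ℤ) : StrictMono (skip p) := fun i j hij => by
  grind [skip]

theorem exists_skip_eq (hpq : p ≠ q) : ∃ i, skip p i = q := by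
  rcases hpq.lt_or_gt with hlt | hlt
  · exact ⟨q - 1, by grind [skip]⟩
  · exact ⟨q, by grind [skip]⟩

theorem eq_of_comp_skip_eq {f g : ℤ → α} (hcomp : f ∘ skip p = g ∘ skip p) (hp : f p = g p) :
    f = g := by
  funext i
  by_cases hi : p = i
  · rwa [← hi]
  · obtain ⟨j, rfl⟩ := exists_skip_eq hi
    exact congrFun hcomp j

/-- The path whose step at `q` has height `v` and whose other steps are those of `w`, the ones from
position `q` on being moved one position to the right. -/
def insertAt (q : ℤ) (v : α) (w : ℤ → α) (i : ℤ) : α :=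
  if i < q then w i else if i = q then v else w (i - 1)

/-- The path `h` rotated by 180 degrees. -/
def rev : (ℤ → α) ≃ (ℤ → αᵒᵈ) where
  toFun f i := toDual (f (-i))
  invFun g i := ofDual (g (-i))
  left_inv f := by simp
  right_inv g := by simp

/-- No step that touches only `B` is visible from `p` to the right, and no step that touches only
`T` is visible from `p` to the left, when steps that touch neither `B` nor `T` are transparent. -/
structure Switchable (T B h : ℤ → α) (p : ℤ) : Prop where
  right : ∀ r > p, (∀ i ∈ Ioo p r, h i ≠ B i ∧ h i ≠ T i) → h r = B r → h r = T r
  left : ∀ r < p, (∀ i ∈ Ioo r p, h i ≠ B i ∧ h i ≠ T i) → h r = T r → h r = B r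

theorem switchable_rev (hp : Switchable T B h p) :
    Switchable (rev B) (rev T) (rev h) (-p) where
  right r hr hfree := hp.left (-r) (by omega) fun i hi => by
    simpa [rev, and_comm] using hfree (-i) (by grind)
  left r hr hfree := hp.right (-r) (by omega) fun i hi => by
    simpa [rev, and_comm] using hfree (-i) (by grind)

variable [LinearOrder α]

/-- The path `k` arises from `h` by deleting a step at position `p` that touches `B` and inserting
a step at position `q` that touches `T`, in such a way that the descents do not move and the steps
shifted by this operation touch neither `B` nor `T`, before or after. -/
structure IsSwitch (T B h k : ℤ → α) (p q : ℤ) : Prop where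
  bottom : h p = B p
  bottom_lt_top : B p < T p
  top : k q = T q
  comp_skip : h ∘ skip p = k ∘ skip q
  free_left : ∀ i ∈ uIcc p q, i ≠ p → h i ∈ Ioo (B i) (T i)
  free_right : ∀ i ∈ uIcc p q, i ≠ q → k i ∈ Ioo (B i) (T i)
  descent_iff : ∀ i, k (i + 1) < k i ↔ h (i + 1) < h i

theorem monotone_rev (hT : Monotone T) : Monotone (rev T) :=
  fun _ _ hij => hT (neg_le_neg hij)

theorem IsSwitch.lt_top (hs : IsSwitch T B h k p q) : B q < T q := by
  rcases eq_or_ne q p with rfl | hne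
  · exact hs.bottom_lt_top
  · have := hs.free_left q (by simp) hne
    exact this.1.trans this.2

theorem isSwitch_rev (hs : IsSwitch T B h k p q) :
    IsSwitch (rev B) (rev T) (rev k) (rev h) (-q) (-p) where
  bottom := by simpa [rev] using hs.top
  bottom_lt_top := by simpa [rev] using hs.lt_top
  top := by simpa [rev] using hs.bottom
  comp_skip := by
    funext i
    have hneg : ∀ r, -skip (-r) i = skip r (-i - 1) := by grind [skip]
    simpa [rev, hneg] using (congrFun hs.comp_skip (-i - 1)).symm
  free_left i hi hiq := by
    have := hs.free_right (-i) (by grind [mem_uIcc]) (by grind)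
    exact ⟨this.2, this.1⟩
  free_right i hi hip := by
    have := hs.free_left (-i) (by grind [mem_uIcc]) (by grind)
    exact ⟨this.2, this.1⟩
  descent_iff i := by
    have := hs.descent_iff (-(i + 1))
    have hi : -(i + 1) + 1 = -i := by ring
    rw [hi] at this
    exact this.symm

theorem isSwitch_of_rev (hs : IsSwitch (rev B) (rev T) (rev k) (rev h) (-q) (-p)) :
    IsSwitch T B h k p q := by
  have hrev : IsSwitch (α := α) (fun i => T (- -i)) (fun i => B (- -i)) (fun i => h (- -i))
      (fun i => k (- -i)) (- -p) (- -q) := isSwitch_rev hs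
  simpa only [neg_neg] using hrev

/- If `q < q'`, then `k'` is `k` shifted to the left between `q` and `q'`; as both have the descents
of `h`, the descent of `k` from `T q` propagates along `k'` up to `q'`, so `k'` cannot touch `T`
there. -/
theorem IsSwitch.right_pos_le (hT : Monotone T) (hs : IsSwitch T B h k p q)
    (hs' : IsSwitch T B h k' p q') : q' ≤ q := by
  by_contra! hlt
  have hshift : ∀ i, q ≤ i → i < q' → k (i + 1) = k' i := fun i hqi hiq => by
    have h₁ := congrFun hs.comp_skip i
    have h₂ := congrFun hs'.comp_skip i
    grind [skip]
  have htop : ∀ i, q ≤ i → i < q' → k' i < T i := fun i hqi hiq => by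
    rcases lt_or_ge i p with hip | hip
    · have h₂ : h i = k' i := by simpa [skip, hip, hiq] using congrFun hs'.comp_skip i
      exact h₂ ▸ (hs.free_left i (by grind [mem_uIcc]) hip.ne).2
    · exact (hs'.free_right i (by grind [mem_uIcc]) hiq.ne).2
  have hdesc : ∀ i, q ≤ i → i < q' → k' (i + 1) < k' i := fun i hqi => by
    induction i, hqi using Int.leInduction with
    | base =>
      intro hq
      rw [hs'.descent_iff, ← hs.descent_iff, hs.top, hshift q le_rfl hq]
      exact htop q le_rfl hq
    | succ i hqi ih =>
      intro hq
      rw [hs'.descent_iff, ← hs.descent_iff, hshift (i + 1) (by omega) hq,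
        hshift i hqi (by omega)]
      exact ih (by omega)
  have hlast := hdesc (q' - 1) (by omega) (by omega)
  rw [sub_add_cancel, hs'.top] at hlast
  exact (hlast.trans (htop (q' - 1) (by omega) (by omega))).not_ge (hT (by omega))

theorem IsSwitch.right_unique (hT : Monotone T) (hs : IsSwitch T B h k p q)
    (hs' : IsSwitch T B h k' p q') : k = k' := by
  obtain rfl := (hs'.right_pos_le hT hs).antisymm (hs.right_pos_le hT hs')
  exact eq_of_comp_skip_eq (hs.comp_skip.symm.trans hs'.comp_skip) (hs.top.trans hs'.top.symm)

theorem IsSwitch.left_unique (hB : Monotone B) (hs : IsSwitch T B h k p q)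
    (hs' : IsSwitch T B h' k p' q) : h = h' :=
  rev.injective ((isSwitch_rev hs).right_unique (monotone_rev hB) (isSwitch_rev hs'))

theorem Switchable.bottom_lt (hsw : Switchable T B h p) (hh : h ∈ Icc B T)
    (htop : ∀ i ∈ Ioc p q, h i < T i) : ∀ i ∈ Ioc p q, B i < h i := by
  rintro i ⟨hpi, hiq⟩
  induction i using Int.strongRec (m := p + 1) with
  | lt => omega
  | ge i _ ih =>
    refine (hh.1 i).lt_of_ne fun hbot => (htop i ⟨hpi, hiq⟩).ne ?_
    refine hsw.right i hpi (fun j hj => ?_) hbot.symm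
    have hjq : j ≤ q := hj.2.le.trans hiq
    exact ⟨(ih j hj.2 hj.1 hjq).ne', (htop j ⟨hj.1, hjq⟩).ne⟩

theorem Switchable.lt_top (hsw : Switchable T B h p) (hh : h ∈ Icc B T)
    (hbot : ∀ i ∈ Ico q p, B i < h i) : ∀ i ∈ Ico q p, h i < T i := fun i hi => by
  have := (switchable_rev hsw).bottom_lt ⟨fun i => hh.2 (-i), fun i => hh.1 (-i)⟩ (q := -q)
    (fun j hj => hbot (-j) (by grind)) (-i) (by grind)
  simpa [rev] using this

theorem exists_ascent_end {s : Finset ℤ} (hT : Monotone T) (hBT : ∀ i ∉ s, B i = T i)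
    (hh : h ∈ Icc B T) (p : ℤ) :
    ∃ q ≥ p, ¬ (h q ≤ h (q + 1) ∧ h (q + 1) < T q) ∧
      ∀ i, p ≤ i → i < q → h i ≤ h (i + 1) ∧ h (i + 1) < T i := by
  obtain ⟨m, hm⟩ := s.bddAbove
  obtain ⟨q, ⟨hpq, hq⟩, hleast⟩ := Int.exists_least_of_bdd
    (P := fun q => p ≤ q ∧ ¬ (h q ≤ h (q + 1) ∧ h (q + 1) < T q)) ⟨p, fun _ hq => hq.1⟩
    ⟨max p m, le_max_left _ _, fun hq => by
      have hend := hBT (max p m + 1) fun hi => by have := hm hi; omega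
      have := hh.1 (max p m + 1)
      have := hT (show max p m ≤ max p m + 1 by omega)
      grind⟩
  exact ⟨q, hpq, hq, fun i hpi hiq => by_contra fun hi => hiq.not_ge (hleast i ⟨hpi, hi⟩)⟩

theorem exists_descent_start {s : Finset ℤ} (hT : Monotone T) (hBT : ∀ i ∉ s, B i = T i)
    (hh : h ∈ Icc B T) (p : ℤ) :
    ∃ q ≤ p, h (q - 1) ≤ h q ∧ ∀ i, q ≤ i → i < p → h (i + 1) < h i := by
  obtain ⟨m, hm⟩ := s.bddBelow
  obtain ⟨q, ⟨hqp, hq⟩, hgreatest⟩ := Int.exists_greatest_of_bdd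
    (P := fun q => q ≤ p ∧ h (q - 1) ≤ h q) ⟨p, fun _ hq => hq.1⟩
    ⟨min p (m - 1), min_le_left _ _, by
      have hend := hBT (min p (m - 1)) fun hi => by have := hm hi; omega
      have := hh.1 (min p (m - 1))
      have := hh.2 (min p (m - 1) - 1)
      have := hT (show min p (m - 1) - 1 ≤ min p (m - 1) by omega)
      grind⟩
  refine ⟨q, hqp, hq, fun i hqi hip => not_le.1 fun hi => ?_⟩
  have := hgreatest (i + 1) ⟨hip, by rwa [add_sub_cancel_right]⟩
  omega

theorem Switchable.exists_isSwitch_right {s : Finset ℤ} (hT : Monotone T) (hB : Monotone B)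
    (hBT : ∀ i ∉ s, B i = T i) (hh : h ∈ Icc B T) (hp : h p = B p) (hlt : B p < T p)
    (hsw : Switchable T B h p) (hprev : h (p - 1) ≤ B p ∨ h (p + 1) < h (p - 1)) :
    ∃ k q, IsSwitch T B h k p q := by
  obtain ⟨q, hpq, hq, hup⟩ := exists_ascent_end hT hBT hh p
  have htop : ∀ i ∈ Ioc p q, h i < T i := fun i hi => by
    have := (hup (i - 1) (by grind) (by grind)).2
    rw [sub_add_cancel] at this
    exact this.trans_le (hT (by omega))
  have hbot := hsw.bottom_lt hh htop
  refine ⟨insertAt q (T q) (h ∘ skip p), q, hp, hlt, by simp [insertAt], ?_, ?_, ?_, ?_⟩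
  · funext i
    grind [skip, insertAt]
  · intro i hi hip
    rw [uIcc_of_le hpq] at hi
    exact ⟨hbot i (by grind), htop i (by grind)⟩
  · intro i hi hiq
    rw [uIcc_of_le hpq] at hi
    have := hup i hi.1 (by grind)
    have := hbot (i + 1) (by grind)
    have := hB (show i ≤ i + 1 by omega)
    grind [skip, insertAt]
  · -- At `p - 1` this is `hprev`; between `p` and `q` there are no descents; at `q`, and when
    -- `q = p`, it is the choice of `q` as the end of the ascent below `T`.
    intro i
    have hBp := hB (show p ≤ p + 1 by omega)
    have hTp := hT (show p - 1 ≤ p by omega)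
    have hTp' := hT (show q - 1 ≤ q by omega)
    have := hh.1 (p + 1)
    have := hh.2 (p - 1)
    have := hh.2 q
    have := hup i
    have := hup (i + 1)
    grind [skip, insertAt]

theorem Switchable.exists_isSwitch_left {s : Finset ℤ} (hT : Monotone T) (hB : Monotone B)
    (hBT : ∀ i ∉ s, B i = T i) (hh : h ∈ Icc B T) (hp : h p = B p) (hlt : B p < T p)
    (hsw : Switchable T B h p) (hprev : B p < h (p - 1)) (hnext : h (p - 1) ≤ h (p + 1)) :
    ∃ k q, IsSwitch T B h k p q := by
  obtain ⟨q, hqp, hq, hdown⟩ := exists_descent_start hT hBT hh p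
  have hne : q ≠ p := by grind
  have hbot : ∀ i ∈ Ico q p, B i < h i := fun i hi =>
    ((hB (by omega)).trans (hh.1 (i + 1))).trans_lt (hdown i hi.1 hi.2)
  have htop := hsw.lt_top hh hbot
  refine ⟨insertAt q (T q) (h ∘ skip p), q, hp, hlt, by simp [insertAt], ?_, ?_, ?_, ?_⟩
  · funext i
    grind [skip, insertAt]
  · intro i hi hip
    rw [uIcc_of_ge hqp] at hi
    exact ⟨hbot i (by grind), htop i (by grind)⟩
  · intro i hi hiq
    rw [uIcc_of_ge hqp] at hi
    have := htop (i - 1) (by grind)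
    have := hdown (i - 1) (by grind) (by grind)
    have := hh.1 i
    have := hT (show i - 1 ≤ i by omega)
    grind [skip, insertAt]
  · -- No descent at `q - 1` or at `p`, and a descent everywhere in between.
    intro i
    have := hB (show p ≤ p + 1 by omega)
    have := hT (show q - 1 ≤ q by omega)
    have := hh.1 (p + 1)
    have := hh.2 (q - 1)
    have := htop q
    have := hdown i
    have := hdown (i - 1)
    grind [skip, insertAt]

theorem Switchable.exists_isSwitch {s : Finset ℤ} (hT : Monotone T) (hB : Monotone B)
    (hBT : ∀ i ∉ s, B i = T i) (hh : h ∈ Icc B T) (hp : h p = B p) (hlt : B p < T p)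
    (hsw : Switchable T B h p) : ∃ k q, IsSwitch T B h k p q := by
  by_cases hprev : h (p - 1) ≤ B p ∨ h (p + 1) < h (p - 1)
  · exact hsw.exists_isSwitch_right hT hB hBT hh hp hlt hprev
  · push Not at hprev
    exact hsw.exists_isSwitch_left hT hB hBT hh hp hlt hprev.1 hprev.2

theorem Switchable.exists_isSwitch_of_top {s : Finset ℤ} (hT : Monotone T) (hB : Monotone B)
    (hBT : ∀ i ∉ s, B i = T i) (hk : k ∈ Icc B T) (hq : k q = T q) (hlt : B q < T q)
    (hsw : Switchable T B k q) : ∃ h p, IsSwitch T B h k p q := by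
  obtain ⟨h, p, hswitch⟩ := (switchable_rev hsw).exists_isSwitch
    (s := s.map (Equiv.neg ℤ).toEmbedding)
    (monotone_rev hB) (monotone_rev hT)
    (fun i hi => congrArg toDual (hBT (-i) fun h => hi (Finset.mem_map.2 ⟨-i, h, neg_neg i⟩)).symm)
    ⟨fun i => hk.2 (-i), fun i => hk.1 (-i)⟩ (by simp [rev, hq]; rfl)
    (by simpa [rev] using hlt)
  obtain ⟨h, rfl⟩ := rev.surjective h
  exact ⟨h, -p, isSwitch_of_rev (by rwa [neg_neg])⟩

theorem IsSwitch.eq_or_free (hs : IsSwitch T B h k p q) (i : ℤ) (hip : i ≠ p) (hiq : i ≠ q) :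
    k i = h i ∨ h i ∈ Ioo (B i) (T i) ∧ k i ∈ Ioo (B i) (T i) := by
  by_cases hi : i ∈ uIcc p q
  · exact .inr ⟨hs.free_left i hi hip, hs.free_right i hi hiq⟩
  · refine .inl ?_
    have h₁ := congrFun hs.comp_skip i
    have h₂ := congrFun hs.comp_skip (i - 1)
    grind [skip, mem_uIcc]

theorem IsSwitch.mem_Icc_iff (hs : IsSwitch T B h k p q) : h ∈ Icc B T ↔ k ∈ Icc B T := by
  have hp : k p ∈ Icc (B p) (T p) := by
    rcases eq_or_ne p q with rfl | hpq
    · exact ⟨hs.top ▸ hs.lt_top.le, hs.top.le⟩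
    · exact Ioo_subset_Icc_self (hs.free_right p (by simp) hpq)
  have hq : h q ∈ Icc (B q) (T q) := by
    rcases eq_or_ne q p with rfl | hqp
    · exact ⟨hs.bottom.ge, hs.bottom ▸ hs.lt_top.le⟩
    · exact Ioo_subset_Icc_self (hs.free_left q (by simp) hqp)
  have := hs.bottom_lt_top
  have := hs.lt_top
  have hne := hs.eq_or_free
  have := hs.bottom
  have := hs.top
  have hiff : ∀ i, h i ∈ Icc (B i) (T i) ↔ k i ∈ Icc (B i) (T i) := fun i => by
    have := hne i
    grind
  simpa [Pi.le_def, forall_and] using forall_congr' hiff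

/-- The positions in `s` at which `h` touches the path `Q`. -/
def contacts (s : Finset ℤ) (Q h : ℤ → α) : Finset ℤ := s.filter fun i => h i = Q i

section Contacts

variable {s : Finset ℤ} (hBT : ∀ i ∉ s, B i = T i)

theorem IsSwitch.contacts_bottom (hs : IsSwitch T B h k p q) :
    contacts s B k = (contacts s B h).erase p := by
  ext i
  have := hs.eq_or_free i
  have := hs.top
  have := hs.lt_top
  have := hs.free_right p (by simp)
  have := hs.free_left q (by simp)
  grind [contacts]

include hBT

theorem IsSwitch.contacts_top (hs : IsSwitch T B h k p q) :
    contacts s T k = insert q (contacts s T h) := by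
  ext i
  have := hs.eq_or_free i
  have := hs.bottom
  have := hs.bottom_lt_top
  have := hs.top
  have := hs.lt_top
  have := hs.free_right p (by simp)
  have := hBT q
  grind [contacts]

theorem IsSwitch.mem_contacts (hs : IsSwitch T B h k p q) :
    p ∈ contacts s B h ∧ p ∉ contacts s T h ∧
      ∀ i ∈ uIcc p q, i ≠ p → i ∉ contacts s B h ∧ i ∉ contacts s T h := by
  have := hs.bottom
  have := hs.bottom_lt_top
  have := hBT p
  have := hs.free_left
  grind [contacts]

theorem switchable_of_isCritical (hp : IsCritical (contacts s B h) (contacts s T h) p) :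
    Switchable T B h p where
  right r hr hfree hbot := by
    by_contra htop
    have hconst := cutCost_eq_of_forall_notMem (b := contacts s B h) (t := contacts s T h)
      (i := p + 1) (j := r) (by omega) (by grind [contacts])
    have hstep := cutCost_add_one (contacts s B h) (contacts s T h) r
    have hle := hp.2 (r + 1) (by omega)
    grind [contacts]
  left r hr hfree htop := by
    by_contra hbot
    have hconst := cutCost_eq_of_forall_notMem (b := contacts s B h) (t := contacts s T h)
      (i := r + 1) (j := p) (by omega) (by grind [contacts])
    have hstep := cutCost_add_one (contacts s B h) (contacts s T h) r
    have hle := hp.1 r (by omega)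
    grind [contacts]

end Contacts

/-- The heights of those steps of `h` at positions in `s` that touch neither `B` nor `T`. -/
def freeHeights (s : Finset ℤ) (T B h : ℤ → α) : List α :=
  (s.filter fun i => B i < h i ∧ h i < T i).sort.map h

theorem freeHeights_eq_map_sort {s m : Finset ℤ} (hp : h p ∉ Ioo (B p) (T p))
    (hm : ∀ i, i ∈ m ↔ skip p i ∈ s ∧ h (skip p i) ∈ Ioo (B (skip p i)) (T (skip p i))) :
    freeHeights s T B h = m.sort.map (h ∘ skip p) := by
  have hfree : (s.filter fun i => B i < h i ∧ h i < T i) =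
      m.map ⟨skip p, (strictMono_skip p).injective⟩ := by
    ext i
    simp only [Finset.mem_filter, Finset.mem_map, Function.Embedding.coeFn_mk]
    refine ⟨fun hi => ?_, fun ⟨j, hj, hji⟩ => hji ▸ (hm j).1 hj⟩
    obtain ⟨j, rfl⟩ := exists_skip_eq (p := p) (q := i) (by grind)
    exact ⟨j, (hm j).2 hi, rfl⟩
  rw [freeHeights, hfree, ← ((strictMono_skip p).strictMonoOn _).map_finsetSort, List.map_map]
  rfl

theorem IsSwitch.freeHeights_eq {s : Finset ℤ} (hBT : ∀ i ∉ s, B i = T i)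
    (hs : IsSwitch T B h k p q) : freeHeights s T B k = freeHeights s T B h := by
  obtain ⟨m, hm⟩ : ∃ m : Finset ℤ, ∀ i, i ∈ m ↔
      skip p i ∈ s ∧ h (skip p i) ∈ Ioo (B (skip p i)) (T (skip p i)) :=
    ⟨(s.filter fun i => B i < h i ∧ h i < T i).preimage (skip p)
      (strictMono_skip p).injective.injOn, by simp⟩
  have hmk : ∀ i, i ∈ m ↔ skip q i ∈ s ∧ k (skip q i) ∈ Ioo (B (skip q i)) (T (skip q i)) := by
    intro i
    have hcomp : h (skip p i) = k (skip q i) := congrFun hs.comp_skip i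
    by_cases hi : skip p i = skip q i
    · rw [hm, hcomp, hi]
    · have hl := hs.free_left (skip p i) (by grind [skip, mem_uIcc]) (by grind [skip])
      have hr := hs.free_right (skip q i) (by grind [skip, mem_uIcc]) (by grind [skip])
      have := hBT (skip p i)
      have := hBT (skip q i)
      grind
  rw [freeHeights_eq_map_sort (by simp [hs.top]) hmk,
    freeHeights_eq_map_sort (by simp [hs.bottom]) hm, hs.comp_skip]

/-- The crystal operator of the signature rule: the last uncancelled bottom contact of `h` is
switched to the first uncancelled top contact of `k`. -/
def CriticalSwitch (s : Finset ℤ) (T B h k : ℤ → α) : Prop :=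
  ∃ p q, IsSwitch T B h k p q ∧ IsCritical (contacts s B h) (contacts s T h) p

section CriticalSwitch

variable {s : Finset ℤ} (hBT : ∀ i ∉ s, B i = T i)

include hBT

theorem IsSwitch.isCritical_iff (hs : IsSwitch T B h k p q) :
    IsCritical (contacts s B k) (contacts s T k) q ↔
      IsCritical (contacts s B h) (contacts s T h) p := by
  obtain ⟨hpb, hpt, hfree⟩ := hs.mem_contacts hBT
  rw [hs.contacts_bottom, hs.contacts_top hBT]
  exact isCritical_erase_insert hpb hpt hfree

theorem CriticalSwitch.card_contacts (hr : CriticalSwitch s T B h k) :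
    (contacts s B h).card = (contacts s B k).card + 1 ∧
      (contacts s T k).card = (contacts s T h).card + 1 ∧
      minCutCost (contacts s B k) (contacts s T k) =
        minCutCost (contacts s B h) (contacts s T h) := by
  obtain ⟨p, q, hs, hp⟩ := hr
  obtain ⟨hpb, hpt, hfree⟩ := hs.mem_contacts hBT
  rw [hs.contacts_bottom, hs.contacts_top hBT]
  exact ⟨(Finset.card_erase_add_one hpb).symm,
    Finset.card_insert_of_notMem (notMem_of_forall_uIcc hpt hfree),
    minCutCost_erase_insert hpb hpt hfree hp⟩

theorem IsSwitch.cutCost_lt (hs : IsSwitch T B h k p q) :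
    cutCost (contacts s B h) (contacts s T h) (p + 1) <
      cutCost (contacts s B h) (contacts s T h) p := by
  obtain ⟨hpb, hpt, -⟩ := hs.mem_contacts hBT
  have := cutCost_add_one (contacts s B h) (contacts s T h) p
  grind

theorem IsSwitch.lt_cutCost (hs : IsSwitch T B h k p q) :
    cutCost (contacts s B k) (contacts s T k) q <
      cutCost (contacts s B k) (contacts s T k) (q + 1) := by
  obtain ⟨hpb, hpt, hfree⟩ := hs.mem_contacts hBT
  have := cutCost_erase_insert_self hpb hpt hfree
  rw [hs.contacts_bottom, hs.contacts_top hBT, this.1, this.2]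
  exact hs.cutCost_lt hBT

theorem rightUnique_criticalSwitch (hT : Monotone T) :
    Relator.RightUnique (CriticalSwitch s T B) := by
  rintro h k k' ⟨p, q, hs, hp⟩ ⟨p', q', hs', hp'⟩
  obtain rfl := (hp'.le_of_drop hp (hs.cutCost_lt hBT)).antisymm
    (hp.le_of_drop hp' (hs'.cutCost_lt hBT))
  exact hs.right_unique hT hs'

theorem leftUnique_criticalSwitch (hB : Monotone B) :
    Relator.LeftUnique (CriticalSwitch s T B) := by
  rintro h h' k ⟨p, q, hs, hp⟩ ⟨p', q', hs', hp'⟩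
  rw [← hs.isCritical_iff hBT] at hp
  rw [← hs'.isCritical_iff hBT] at hp'
  obtain rfl := (hp'.le_of_rise hp (hs'.lt_cutCost hBT)).antisymm
    (hp.le_of_rise hp' (hs.lt_cutCost hBT))
  exact hs.left_unique hB hs'

theorem exists_criticalSwitch_right (hT : Monotone T) (hB : Monotone B) (hh : h ∈ Icc B T)
    (hlt : minCutCost (contacts s B h) (contacts s T h) < (contacts s B h).card) :
    ∃ k, CriticalSwitch s T B h k := by
  obtain ⟨p, hp, hdrop⟩ := exists_isCritical_drop hlt
  have hstep := cutCost_add_one (contacts s B h) (contacts s T h) p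
  have hpb : h p = B p ∧ h p ≠ T p := by grind [contacts]
  obtain ⟨k, q, hs⟩ := (switchable_of_isCritical hBT hp).exists_isSwitch hT hB hBT hh hpb.1
    (((hh.1 p).trans (hh.2 p)).lt_of_ne (hpb.1 ▸ hpb.2))
  exact ⟨k, p, q, hs, hp⟩

theorem exists_criticalSwitch_left (hT : Monotone T) (hB : Monotone B) (hk : k ∈ Icc B T)
    (hlt : minCutCost (contacts s B k) (contacts s T k) < (contacts s T k).card) :
    ∃ h, CriticalSwitch s T B h k := by
  obtain ⟨q, hq, hrise⟩ := exists_isCritical_rise hlt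
  have hstep := cutCost_add_one (contacts s B k) (contacts s T k) q
  have hqt : k q = T q ∧ k q ≠ B q := by grind [contacts]
  obtain ⟨h, p, hs⟩ := (switchable_of_isCritical hBT hq).exists_isSwitch_of_top hT hB hBT hk hqt.1
    (((hk.1 q).trans (hk.2 q)).lt_of_ne (hqt.1 ▸ hqt.2.symm))
  exact ⟨h, p, q, hs, (hs.isCritical_iff hBT).1 hq⟩

theorem exists_involutive_Icc (hT : Monotone T) (hB : Monotone B) :
    ∃ Φ : Icc B T → Icc B T, Function.Involutive Φ ∧ ∀ h,
      (∀ i, (Φ h).1 (i + 1) < (Φ h).1 i ↔ h.1 (i + 1) < h.1 i) ∧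
      freeHeights s T B (Φ h).1 = freeHeights s T B h.1 ∧
      (contacts s T (Φ h).1).card = (contacts s B h.1).card ∧
      (contacts s B (Φ h).1).card = (contacts s T h.1).card := by
  obtain ⟨Φ, hΦ, hstat⟩ := exists_involutive_of_chain
    (r := fun h k : Icc B T => CriticalSwitch s T B h k)
    (ν := fun h => minCutCost (contacts s B h.1) (contacts s T h.1))
    (b := fun h => (contacts s B h.1).card) (t := fun h => (contacts s T h.1).card)
    (F := fun h => ((fun i => h.1 (i + 1) < h.1 i), freeHeights s T B h.1))
    (fun _ _ _ hk hk' => Subtype.ext (rightUnique_criticalSwitch hBT hT hk hk'))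
    (fun _ _ _ hh hh' => Subtype.ext (leftUnique_criticalSwitch hBT hB hh hh'))
    (fun _ => minCutCost_le_card_left _ _) (fun _ => minCutCost_le_card_right _ _)
    (fun h hlt => by
      obtain ⟨k, p, q, hs, hp⟩ := exists_criticalSwitch_right hBT hT hB h.2 hlt
      exact ⟨⟨k, hs.mem_Icc_iff.1 h.2⟩, p, q, hs, hp⟩)
    (fun k hlt => by
      obtain ⟨h, p, q, hs, hp⟩ := exists_criticalSwitch_left hBT hT hB k.2 hlt
      exact ⟨⟨h, hs.mem_Icc_iff.2 k.2⟩, p, q, hs, hp⟩)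
    (fun h k hr => by
      obtain ⟨hb, ht, hν⟩ := hr.card_contacts hBT
      obtain ⟨p, q, hs, -⟩ := hr
      refine ⟨hb, ht, hν, Prod.ext ?_ (hs.freeHeights_eq hBT)⟩
      exact funext fun i => propext (hs.descent_iff i))
  refine ⟨Φ, hΦ, fun h => ?_⟩
  obtain ⟨hF, ht, hb⟩ := hstat h
  rw [Prod.ext_iff, funext_iff] at hF
  exact ⟨fun i => iff_of_eq (hF.1 i), hF.2, ht, hb⟩

end CriticalSwitch

end Switch

/-! ### Finite paths -/

section Pad

variable {α : Type*} {n : ℕ} {a c : α} {f g T B : Fin n → α}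

/-- The descent set of a finite path given by the heights `h` of its east steps. -/
def descents [LT α] (h : Fin n → α) : Set (Fin (n - 1)) :=
  {j | h ⟨j + 1, by omega⟩ < h ⟨j, by omega⟩}

/-- The heights of the steps of `h` that touch neither `B` nor `T`, in order. -/
def nonContactHeights [LT α] [DecidableLT α] (T B h : Fin n → α) : List α :=
  ((List.finRange n).filter fun j => decide (B j < h j ∧ h j < T j)).map h

/-- The positions of the steps of a finite path inside a bi-infinite one. -/
def finToInt (n : ℕ) : Fin n ↪ ℤ := Fin.valEmbedding.trans Nat.castEmbedding

theorem strictMono_finToInt (n : ℕ) : StrictMono (finToInt n) :=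
  fun _ _ hij => Nat.cast_lt.2 hij

theorem exists_finToInt_eq {i : ℤ} (h₀ : 0 ≤ i) (hn : i < n) : ∃ j, finToInt n j = i :=
  ⟨⟨i.toNat, by omega⟩, Int.toNat_of_nonneg h₀⟩

/-- The bi-infinite path that continues `h` with steps at height `a` to the left and at height `c`
to the right. -/
noncomputable def pad (a c : α) (h : Fin n → α) : ℤ → α :=
  Function.extend (finToInt n) h fun i => if i < 0 then a else c

@[simp]
theorem pad_finToInt (a c : α) (h : Fin n → α) (j : Fin n) : pad a c h (finToInt n j) = h j :=
  (finToInt n).injective.extend_apply ..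

theorem pad_of_forall_ne {i : ℤ} (hi : ∀ j, finToInt n j ≠ i) (a c : α) (h : Fin n → α) :
    pad a c h i = if i < 0 then a else c :=
  Function.extend_apply' _ _ _ fun ⟨j, hj⟩ => hi j hj

variable [LinearOrder α]

theorem monotone_pad (hf : Monotone f) (ha : ∀ j, a ≤ f j) (hc : ∀ j, f j ≤ c) (hac : a ≤ c) :
    Monotone (pad a c f) := by
  intro i j hij
  by_cases hi : ∃ i', finToInt n i' = i <;> by_cases hj : ∃ j', finToInt n j' = j
  · obtain ⟨i, rfl⟩ := hi
    obtain ⟨j, rfl⟩ := hj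
    simpa using hf ((strictMono_finToInt n).le_iff_le.1 hij)
  · obtain ⟨i, rfl⟩ := hi
    have hi₀ : 0 ≤ finToInt n i := Int.natCast_nonneg i
    simpa [pad_of_forall_ne (not_exists.1 hj), (hi₀.trans hij).not_gt] using hc i
  · obtain ⟨j, rfl⟩ := hj
    have hjn : finToInt n j < n := Nat.cast_lt.2 j.2
    have hi₀ : i < 0 := not_le.1 fun h => hi (exists_finToInt_eq h (hij.trans_lt hjn))
    simpa [pad_of_forall_ne (not_exists.1 hi), hi₀] using ha j
  · rw [pad_of_forall_ne (not_exists.1 hi), pad_of_forall_ne (not_exists.1 hj)]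
    grind

theorem pad_le_pad (a c : α) (hfg : ∀ j, f j ≤ g j) : pad a c f ≤ pad a c g := by
  intro i
  by_cases hi : ∃ j, finToInt n j = i
  · obtain ⟨j, rfl⟩ := hi
    simpa using hfg j
  · simp only [pad_of_forall_ne (not_exists.1 hi), le_refl]

theorem card_contacts_pad (a c : α) (Q h : Fin n → α) :
    (contacts (Finset.univ.map (finToInt n)) (pad a c Q) (pad a c h)).card =
      Nat.card {j // h j = Q j} := by
  rw [contacts, Finset.filter_map, Finset.card_map, Nat.card_eq_fintype_card, Fintype.card_subtype]
  simp

theorem freeHeights_pad (a c : α) (T B h : Fin n → α) :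
    freeHeights (Finset.univ.map (finToInt n)) (pad a c T) (pad a c B) (pad a c h) =
      nonContactHeights T B h := by
  have hsort : (Finset.univ.filter fun j => B j < h j ∧ h j < T j).sort =
      (List.finRange n).filter fun j => decide (B j < h j ∧ h j < T j) :=
    (Finset.sortedLT_sort _).eq_of_mem_iff
      ((List.sortedLT_finRange n).pairwise.filter _).sortedLT (by simp)
  rw [freeHeights, Finset.filter_map, ← ((strictMono_finToInt n).strictMonoOn _).map_finsetSort,
    List.map_map, nonContactHeights, ← hsort]
  simp [Function.comp_def]

theorem mem_descents_iff_pad (a c : α) (h : Fin n → α) (j : Fin (n - 1)) :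
    j ∈ descents h ↔ pad a c h ((j : ℕ) + 1) < pad a c h (j : ℕ) := by
  have hj := pad_finToInt a c h ⟨j, by omega⟩
  have hj' := pad_finToInt a c h ⟨j + 1, by omega⟩
  rw [show finToInt n ⟨j + 1, _⟩ = ((j : ℕ) : ℤ) + 1 from Nat.cast_succ _] at hj'
  exact hj ▸ hj' ▸ Iff.rfl

/-- Finite paths between `B` and `T` as bi-infinite paths between the paths continuing `B` and
`T`. -/
noncomputable def padEquiv (a c : α) (T B : Fin n → α) :
    {h : Fin n → α // ∀ j, B j ≤ h j ∧ h j ≤ T j} ≃ Set.Icc (pad a c B) (pad a c T) where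
  toFun h := ⟨pad a c h.1,
    ⟨pad_le_pad a c fun j => (h.2 j).1, pad_le_pad a c fun j => (h.2 j).2⟩⟩
  invFun g := ⟨g.1 ∘ finToInt n, fun j => by
    simpa using And.intro (g.2.1 (finToInt n j)) (g.2.2 (finToInt n j))⟩
  left_inv h := by simp [Function.comp_def]
  right_inv g := by
    refine Subtype.ext (funext fun i => ?_)
    by_cases hi : ∃ j, finToInt n j = i
    · obtain ⟨j, rfl⟩ := hi
      simp
    · rw [not_exists] at hi
      have hB := g.2.1 i
      have hT := g.2.2 i
      rw [pad_of_forall_ne hi] at hB hT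
      exact (pad_of_forall_ne hi a c _).trans (hB.antisymm hT)

theorem exists_involutive_of_bounded (hT : Monotone T) (hB : Monotone B) (hac : a ≤ c)
    (haT : ∀ j, a ≤ T j) (haB : ∀ j, a ≤ B j) (hTc : ∀ j, T j ≤ c) (hBc : ∀ j, B j ≤ c) :
    ∃ Φ : {h : Fin n → α // ∀ j, B j ≤ h j ∧ h j ≤ T j} →
          {h : Fin n → α // ∀ j, B j ≤ h j ∧ h j ≤ T j},
      (∀ h, Φ (Φ h) = h) ∧
      ∀ h, descents (Φ h).1 = descents h.1 ∧
        nonContactHeights T B (Φ h).1 = nonContactHeights T B h.1 ∧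
        Nat.card {j // (Φ h).1 j = T j} = Nat.card {j // h.1 j = B j} ∧
        Nat.card {j // (Φ h).1 j = B j} = Nat.card {j // h.1 j = T j} := by
  obtain ⟨Φ, hΦ, hstat⟩ := exists_involutive_Icc (s := Finset.univ.map (finToInt n))
    (T := pad a c T) (B := pad a c B)
    (fun i hi => by
      have hi' : ∀ j, finToInt n j ≠ i := by simpa using hi
      rw [pad_of_forall_ne hi', pad_of_forall_ne hi'])
    (monotone_pad hT haT hTc hac) (monotone_pad hB haB hBc hac)
  set e := padEquiv a c T B
  refine ⟨fun h => e.symm (Φ (e h)), fun h => by simp [hΦ _], fun h => ?_⟩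
  obtain ⟨hdesc, hfree, htop, hbot⟩ := hstat (e h)
  obtain ⟨k, hk⟩ := e.surjective (Φ (e h))
  simp only [← hk, Equiv.symm_apply_apply] at hdesc hfree htop hbot ⊢
  refine ⟨?_, ?_, ?_, ?_⟩
  · ext j
    rw [mem_descents_iff_pad a c, mem_descents_iff_pad a c]
    exact hdesc j
  · rwa [← freeHeights_pad a c, ← freeHeights_pad a c]
  · rwa [← card_contacts_pad a c, ← card_contacts_pad a c]
  · rwa [← card_contacts_pad a c, ← card_contacts_pad a c]

end Pad

end ContactSwitch

open ContactSwitch in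
theorem stmt8_general {α : Type*} [LinearOrder α] {n : ℕ} {T B : Fin n → α}
    (hT : Monotone T) (hB : Monotone B) :
    ∃ Φ : {h : Fin n → α // ∀ j, B j ≤ h j ∧ h j ≤ T j} →
          {h : Fin n → α // ∀ j, B j ≤ h j ∧ h j ≤ T j},
      (∀ h, Φ (Φ h) = h) ∧
      ∀ h, descents (Φ h).1 = descents h.1 ∧
        nonContactHeights T B (Φ h).1 = nonContactHeights T B h.1 ∧
        Nat.card {j // (Φ h).1 j = T j} = Nat.card {j // h.1 j = B j} ∧
        Nat.card {j // (Φ h).1 j = B j} = Nat.card {j // h.1 j = T j} := by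
  rcases n with _ | n
  · exact ⟨id, fun _ => rfl, fun h => ⟨rfl, rfl, by simp, by simp⟩⟩
  · refine exists_involutive_of_bounded (a := min (T 0) (B 0))
      (c := max (T (Fin.last n)) (B (Fin.last n))) hT hB ?_ ?_ ?_ ?_ ?_
    · exact (min_le_left _ _).trans ((hT (Fin.zero_le _)).trans (le_max_left _ _))
    · exact fun j => (min_le_left _ _).trans (hT (Fin.zero_le j))
    · exact fun j => (min_le_right _ _).trans (hB (Fin.zero_le j))
    · exact fun j => (hT (Fin.le_last j)).trans (le_max_left _ _)
    · exact fun j => (hB (Fin.le_last j)).trans (le_max_right _ _)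

/-- There is an involution on `P̃(T,B)` preserving the descent set and the
non-contact height sequence that exchanges the statistics `t` and `b`. -/
theorem stmt8 {x y : ℕ} (T B : Fin x → Fin (y+1))
    (hT : Monotone T) (hB : Monotone B) (hTB : ∀ j, B j ≤ T j) :
    ∃ Φ : {h : Fin x → Fin (y+1) // ∀ j, B j ≤ h j ∧ h j ≤ T j} →
          {h : Fin x → Fin (y+1) // ∀ j, B j ≤ h j ∧ h j ≤ T j},
      (∀ h, Φ (Φ h) = h) ∧
      ∀ h, descentSet (Φ h).1 = descentSet h.1 ∧
        ncseq T B (Φ h).1 = ncseq T B h.1 ∧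
        ccount T (Φ h).1 = ccount B h.1 ∧
        ccount B (Φ h).1 = ccount T h.1 :=
  stmt8_general hT hB
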